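/- arXiv:2508.02484 — 3 statements merged into one kernel-verified Lean document; each statement's English description precedes it below -/
import Mathlib

section
/- Let 0 ≤ k ≤ n be integers and d = (d₁,…,dₙ) ∈ ℝⁿ with 0 ≤ d_j ≤ 1 for all j and d₁ + ⋯ + dₙ = k. Then there exists a matrix F ∈ Mat_{k×n}(ℂ) with F F* = I_k whose columns f₁,…,fₙ satisfy ‖f_j‖² = d_j for all j. (This is the existence half of the Schur–Horn theorem specialized to rank-k projections: every point of the polytope Δ_{n,k} is realized as the diagonal of a Hermitian projection of trace k.) -/
open Matrix

/-- Real frames with prescribed diagonal. -/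
def RealFrame (n k : ℕ) (d : Fin n → ℝ) : Prop :=
  ∃ F : Fin k → Fin n → ℝ,
    (∀ a b, ∑ j, F a j * F b j = if a = b then 1 else 0) ∧ ∀ j, ∑ a, F a j ^ 2 = d j

lemma sum_split {n : ℕ} (i j : Fin n) (hij : i ≠ j) (f : Fin n → ℝ) :
    ∑ l, f l = f i + f j + ∑ l ∈ (Finset.univ.erase i).erase j, f l := by
  rw [← Finset.add_sum_erase Finset.univ f (Finset.mem_univ i),
    ← Finset.add_sum_erase (Finset.univ.erase i) f (a := j) (by simp [hij.symm])]
  ring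

lemma sum_zero_one {n : ℕ} (s : Finset (Fin n)) (d : Fin n → ℝ)
    (h : ∀ j ∈ s, d j = 0 ∨ d j = 1) :
    ∑ j ∈ s, d j = ((s.filter (fun j => d j = 1)).card : ℝ) := by
  rw [Finset.card_filter]
  push_cast
  refine Finset.sum_congr rfl fun j hj => ?_
  rcases h j hj with h | h <;> simp [h]

lemma base_case (n k : ℕ) (d : Fin n → ℝ) (h : ∀ j, d j = 0 ∨ d j = 1)
    (hsum : ∑ j, d j = (k : ℝ)) : RealFrame n k d := by
  have hc := sum_zero_one Finset.univ d (fun j _ => h j)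
  rw [hsum] at hc
  have hc' : (Finset.univ.filter (fun j => d j = 1)).card = k := by exact_mod_cast hc.symm
  let e := (Finset.univ.filter (fun j => d j = 1)).orderIsoOfFin hc'
  refine ⟨fun a j => if (e a : Fin n) = j then 1 else 0, ?_, ?_⟩
  · intro a b
    simp [Subtype.ext_iff.symm, eq_comm]
  · intro j
    rcases h j with hj | hj
    · rw [hj]
      refine Finset.sum_eq_zero fun a _ => ?_
      have := (e a).2
      simp only [Finset.mem_filter] at this
      have h2 : (e a : Fin n) ≠ j := by
        rintro rfl
        linarith [this.2]
      simp [h2]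
    · rw [hj]
      have hm : j ∈ Finset.univ.filter (fun j => d j = 1) := by simp [hj]
      rw [Finset.sum_eq_single (e.symm ⟨j, hm⟩)]
      · simp
      · intro b _ hb
        have : (e b : Fin n) ≠ j := by
          intro h3
          apply hb
          rw [OrderIso.eq_symm_apply]
          exact Subtype.ext h3
        simp [this]
      · simp

lemma rotate (n k : ℕ) (d d' : Fin n → ℝ) (i j : Fin n) (hij : i ≠ j)
    (h : RealFrame n k d') (hrest : ∀ l, l ≠ i → l ≠ j → d l = d' l)
    (hs : d i + d j = d' i + d' j) (h1 : d' j ≤ d i) (h2 : d i ≤ d' i) :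
    RealFrame n k d := by
  obtain ⟨F, hF, hd⟩ := h
  obtain ⟨t, -, ht⟩ : ∃ t ∈ Set.Icc 0 (Real.pi / 2),
      ∑ a, (Real.cos t * F a i - Real.sin t * F a j) ^ 2 = d i := by
    have := intermediate_value_Icc' (a := 0) (b := Real.pi / 2) (by positivity)
      (f := fun t => ∑ a, (Real.cos t * F a i - Real.sin t * F a j) ^ 2)
      (by fun_prop)
    apply this
    simp [hd, h1, h2]
  have hcs := Real.sin_sq_add_cos_sq t
  set c := Real.cos t
  set s := Real.sin t
  refine ⟨fun a l => if l = i then c * F a i - s * F a j else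
    if l = j then s * F a i + c * F a j else F a l, ?_, ?_⟩
  · intro a b
    rw [← hF a b, sum_split i j hij, sum_split i j hij]
    congr 1
    · simp only [if_true, hij.symm, if_false]
      linear_combination (F a i * F b i + F a j * F b j) * hcs
    · refine Finset.sum_congr rfl fun l hl => ?_
      simp only [Finset.mem_erase] at hl
      simp [hl.1, hl.2.1]
  · intro l
    by_cases hli : l = i
    · subst hli; simpa using ht
    by_cases hlj : l = j
    · subst hlj
      simp only [hli, if_false, if_true]
      have : ∑ a, (s * F a i + c * F a l) ^ 2 + ∑ a, (c * F a i - s * F a l) ^ 2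
          = ∑ a, F a i ^ 2 + ∑ a, F a l ^ 2 := by
        rw [← Finset.sum_add_distrib, ← Finset.sum_add_distrib]
        refine Finset.sum_congr rfl fun a _ => ?_
        linear_combination (F a i ^ 2 + F a l ^ 2) * hcs
      rw [ht, hd, hd] at this
      linarith
    · simp [hli, hlj, hd, hrest l hli hlj]

lemma realFrame_exists (n k m : ℕ) : ∀ (d : Fin n → ℝ), (∀ j, 0 ≤ d j ∧ d j ≤ 1) →
    ∑ j, d j = (k : ℝ) → (Finset.univ.filter (fun j => 0 < d j ∧ d j < 1)).card ≤ m →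
    RealFrame n k d := by
  induction m with
  | zero =>
    intro d hd hsum hm
    refine base_case n k d (fun j => ?_) hsum
    have h0 := Finset.card_eq_zero.mp (Nat.le_zero.mp hm)
    have : j ∉ Finset.univ.filter (fun j => 0 < d j ∧ d j < 1) := by rw [h0]; simp
    simp only [Finset.mem_filter, Finset.mem_univ, true_and, not_and, not_lt] at this
    rcases (hd j).1.eq_or_lt with h | h
    · exact Or.inl h.symm
    · exact Or.inr (le_antisymm (hd j).2 (this h))
  | succ m ih =>
    intro d hd hsum hm
    by_cases hall : ∀ j, d j = 0 ∨ d j = 1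
    · exact base_case n k d hall hsum
    push Not at hall
    obtain ⟨i, hi0, hi1⟩ := hall
    have hi0' : 0 < d i := lt_of_le_of_ne (hd i).1 hi0.symm
    have hi1' : d i < 1 := lt_of_le_of_ne (hd i).2 hi1
    obtain ⟨j, hji, hj0, hj1⟩ : ∃ j, j ≠ i ∧ d j ≠ 0 ∧ d j ≠ 1 := by
      by_contra hno
      push Not at hno
      have hz := sum_zero_one (Finset.univ.erase i) d (fun j hj => by
        by_cases h : d j = 0
        · exact Or.inl h
        · exact Or.inr (hno j (Finset.ne_of_mem_erase hj) h))
      rw [← Finset.add_sum_erase Finset.univ d (Finset.mem_univ i), hz] at hsum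
      set q := ((Finset.univ.erase i).filter (fun j => d j = 1)).card
      have a1 : (q : ℝ) < k := by linarith
      have a2 : (k : ℝ) < q + 1 := by linarith
      norm_cast at a1 a2
      omega
    have hj0' : 0 < d j := lt_of_le_of_ne (hd j).1 hj0.symm
    have hj1' : d j < 1 := lt_of_le_of_ne (hd j).2 hj1
    obtain ⟨x, y, hx, hy, hxy, hyi, hix, hend⟩ : ∃ x y : ℝ, (0 ≤ x ∧ x ≤ 1) ∧ (0 ≤ y ∧ y ≤ 1) ∧
        d i + d j = x + y ∧ y ≤ d i ∧ d i ≤ x ∧ (x = 1 ∨ y = 0) := by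
      by_cases hle : d i + d j ≤ 1
      · exact ⟨d i + d j, 0, ⟨by linarith, hle⟩, by simp, by ring, by linarith, by linarith,
          Or.inr rfl⟩
      · exact ⟨1, d i + d j - 1, by simp, ⟨by linarith, by linarith⟩, by ring, by linarith,
          by linarith, Or.inl rfl⟩
    let d' : Fin n → ℝ := fun l => if l = i then x else if l = j then y else d l
    have ei : d' i = x := by simp [d']
    have ej : d' j = y := by simp [d', hji]
    have er : ∀ l, l ≠ i → l ≠ j → d' l = d l := by
      intro l h1 h2; simp [d', h1, h2]
    refine rotate n k d d' i j hji.symm (ih d' ?_ ?_ ?_) (fun l h1 h2 => (er l h1 h2).symm)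
      (by rw [ei, ej, hxy]) (by rw [ej]; exact hyi) (by rw [ei]; exact hix)
    · intro l
      by_cases h1 : l = i
      · rw [h1, ei]; exact hx
      by_cases h2 : l = j
      · rw [h2, ej]; exact hy
      · rw [er l h1 h2]; exact hd l
    · rw [← hsum, sum_split i j hji.symm, sum_split i j hji.symm d, ei, ej, hxy]
      congr 1
      refine Finset.sum_congr rfl fun l hl => ?_
      simp only [Finset.mem_erase] at hl
      exact er l hl.2.1 hl.1
    · refine Nat.lt_succ_iff.mp (lt_of_lt_of_le (Finset.card_lt_card ?_) hm)
      rw [Finset.ssubset_iff_of_subset]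
      · rcases hend with h | h
        · exact ⟨i, by simp [hi0', hi1'], by simp [ei, h]⟩
        · exact ⟨j, by simp [hj0', hj1'], by simp [ej, h]⟩
      · intro l hl
        simp only [Finset.mem_filter, Finset.mem_univ, true_and] at hl ⊢
        by_cases h1 : l = i
        · rw [h1]; exact ⟨hi0', hi1'⟩
        by_cases h2 : l = j
        · rw [h2]; exact ⟨hj0', hj1'⟩
        · rwa [er l h1 h2] at hl

theorem exists_frame_of_mem_polytope (n k : ℕ) (hkn : k ≤ n)
    (d : Fin n → ℝ) (hd : ∀ j : Fin n, 0 ≤ d j ∧ d j ≤ 1)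
    (hsum : ∑ j : Fin n, d j = (k : ℝ)) :
    ∃ F : Matrix (Fin k) (Fin n) ℂ,
      F * F.conjTranspose = 1 ∧ ∀ j : Fin n, ∑ i : Fin k, ‖F i j‖ ^ 2 = d j := by
  obtain ⟨F, hF, hFd⟩ := realFrame_exists n k _ d hd hsum le_rfl
  refine ⟨Matrix.of fun a j => (F a j : ℂ), ?_, ?_⟩
  · ext a b
    have := congrArg (fun r : ℝ => (r : ℂ)) (hF a b)
    simp only [Matrix.mul_apply, Matrix.conjTranspose_apply, Matrix.of_apply, Matrix.one_apply,
      Complex.star_def, Complex.conj_ofReal]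
    push_cast at this
    rw [this]
    split_ifs <;> simp
  · intro j
    simp [← hFd j]
end

section
/- The level set μ⁻¹((1/3, 1/3, 1/3, 1)) ⊂ Gr_2(ℂ⁴), i.e. the set of matrices P ∈ Mat_{4×4}(ℂ) with P* = P, P² = P, tr(P) = 2 and diagonal entries (1/3, 1/3, 1/3, 1), equipped with the subspace topology from Mat_{4×4}(ℂ), is homeomorphic to the 2-torus S¹ × S¹, where S¹ is the unit circle in ℂ. -/
open Matrix

/-- The level set `μ⁻¹(d)` of the Grassmannian `Gr_k(ℂⁿ)`: Hermitian projections `P` with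
`tr P = k` whose diagonal entries are `d₁, …, dₙ`. -/
def GrassLevel (n k : ℕ) (d : Fin n → ℝ) : Set (Matrix (Fin n) (Fin n) ℂ) :=
  {P | P.conjTranspose = P ∧ P * P = P ∧ P.trace = (k : ℂ) ∧
    ∀ j : Fin n, P j j = (d j : ℂ)}

/-- The inverse parametrisation. -/
noncomputable def torusMat (u v : ℂ) : Matrix (Fin 4) (Fin 4) ℂ :=
  !![1/3, u/3, v/3, 0;
     star u/3, 1/3, star u * v/3, 0;
     star v/3, u * star v/3, 1/3, 0;
     0, 0, 0, 1]

lemma torusMat_mem (u v : ℂ) (hu : u * star u = 1) (hv : v * star v = 1) :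
    torusMat u v ∈ GrassLevel 4 2 ![1/3, 1/3, 1/3, 1] := by
  refine ⟨?_, ?_, ?_, ?_⟩
  · ext i j
    fin_cases i <;> fin_cases j <;> simp [torusMat, mul_comm]
  · ext i j
    fin_cases i <;> fin_cases j <;>
      simp [torusMat, Matrix.mul_apply, Fin.sum_univ_four] <;>
      simp only [Complex.star_def] at hu hv <;> grind
  · simp [torusMat, Matrix.trace, Fin.sum_univ_four]; norm_num
  · intro j
    fin_cases j <;> simp [torusMat]

lemma level_facts (P : Matrix (Fin 4) (Fin 4) ℂ)
    (hP : P ∈ GrassLevel 4 2 ![1/3, 1/3, 1/3, 1]) :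
    (3 * P 0 1) * star (3 * P 0 1) = 1 ∧ (3 * P 0 2) * star (3 * P 0 2) = 1 ∧
      torusMat (3 * P 0 1) (3 * P 0 2) = P := by
  obtain ⟨hH, hI, -, hd⟩ := hP
  have h (i j) : P j i = star (P i j) := by
    conv_lhs => rw [← hH]
    rfl
  have m (i j) : P i 0 * P 0 j + P i 1 * P 1 j + P i 2 * P 2 j + P i 3 * P 3 j = P i j := by
    conv_rhs => rw [← hI]
    simp [Matrix.mul_apply, Fin.sum_univ_four]
  have d0 : P 0 0 = 1/3 := by simpa using hd 0
  have d1 : P 1 1 = 1/3 := by simpa using hd 1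
  have d2 : P 2 2 = 1/3 := by simpa using hd 2
  have d3 : P 3 3 = 1 := by simpa using hd 3
  have z : P 0 3 = 0 ∧ P 1 3 = 0 ∧ P 2 3 = 0 := by
    have e := m 3 3
    rw [h 0 3, h 1 3, h 2 3, d3] at e
    simp only [Complex.star_def, ← Complex.normSq_eq_conj_mul_self] at e
    have e' : Complex.normSq (P 0 3) + Complex.normSq (P 1 3) + Complex.normSq (P 2 3) + 1 * 1
        = 1 := by exact_mod_cast e
    have a := Complex.normSq_nonneg (P 0 3)
    have b := Complex.normSq_nonneg (P 1 3)
    have c := Complex.normSq_nonneg (P 2 3)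
    refine ⟨?_, ?_, ?_⟩ <;> apply Complex.normSq_eq_zero.1 <;> linarith
  obtain ⟨z0, z1, z2⟩ := z
  have y0 : P 3 0 = 0 := by rw [h 0 3, z0]; simp
  have y1 : P 3 1 = 0 := by rw [h 1 3, z1]; simp
  have y2 : P 3 2 = 0 := by rw [h 2 3, z2]; simp
  have e00 := m 0 0
  have e11 := m 1 1
  have e22 := m 2 2
  have e02 := m 0 2
  rw [d0, z0, y0] at e00
  rw [d1, z1, y1] at e11
  rw [d2, z2, y2] at e22
  rw [d0, d2, z0, y2] at e02
  have A : P 0 1 * P 1 0 = 1/9 := by linear_combination (e00 + e11 - e22)/2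
  have B : P 0 2 * P 2 0 = 1/9 := by linear_combination (e00 - e11 + e22)/2
  have C : P 1 2 = 3 * P 1 0 * P 0 2 := by
    linear_combination 9 * P 1 0 * e02 - 9 * P 1 2 * A
  have C' : P 2 1 = 3 * P 0 1 * P 2 0 := by
    rw [h 1 2, C, h 0 1, h 0 2]; simp
  have s1 : star (3 * P 0 1) = 3 * P 1 0 := by rw [h 0 1]; simp
  have s2 : star (3 * P 0 2) = 3 * P 2 0 := by rw [h 0 2]; simp
  refine ⟨?_, ?_, ?_⟩
  · rw [s1]; linear_combination 9 * A
  · rw [s2]; linear_combination 9 * B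
  · unfold torusMat
    rw [s1, s2]
    ext i j
    fin_cases i <;> fin_cases j <;> simp [d0, d1, d2, d3, z0, z1, z2, y0, y1, y2, C, C'] <;> ring

lemma mem_sphere_iff_mul_star (u : ℂ) : u ∈ Metric.sphere (0 : ℂ) 1 ↔ u * star u = 1 := by
  rw [mem_sphere_zero_iff_norm, Complex.star_def, Complex.mul_conj, Complex.normSq_eq_norm_sq]
  norm_cast
  exact (pow_eq_one_iff_of_nonneg (norm_nonneg u) two_ne_zero).symm

theorem grassLevel_third_third_third_one_homeo_torus :
    Nonempty (↥(GrassLevel 4 2 ![1/3, 1/3, 1/3, 1]) ≃ₜ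
      (↥(Metric.sphere (0 : ℂ) 1) × ↥(Metric.sphere (0 : ℂ) 1))) := by
  refine ⟨⟨⟨fun P => (⟨3 * P.1 0 1, (mem_sphere_iff_mul_star _).2 (level_facts P.1 P.2).1⟩,
      ⟨3 * P.1 0 2, (mem_sphere_iff_mul_star _).2 (level_facts P.1 P.2).2.1⟩),
    fun p => ⟨torusMat p.1 p.2, torusMat_mem _ _ ((mem_sphere_iff_mul_star _).1 p.1.2)
      ((mem_sphere_iff_mul_star _).1 p.2.2)⟩, ?_, ?_⟩, ?_, ?_⟩⟩
  · intro P
    exact Subtype.ext (level_facts P.1 P.2).2.2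
  · rintro ⟨⟨u, hu⟩, ⟨v, hv⟩⟩
    ext <;> simp [torusMat] <;> ring
  · have c (i j : Fin 4) : Continuous
        fun P : ↥(GrassLevel 4 2 ![1/3, 1/3, 1/3, 1]) => 3 * P.1 i j :=
      continuous_const.mul (continuous_subtype_val.matrix_elem i j)
    exact ((c 0 1).subtype_mk _).prodMk ((c 0 2).subtype_mk _)
  · refine Continuous.subtype_mk ?_ _
    refine continuous_matrix fun i j => ?_
    fin_cases i <;> fin_cases j <;> simp [torusMat] <;> fun_prop
end

section
/- The space 𝓕^{(1/3,1/3,1/3,1)}_{4,2} of normalized tight frames F ∈ Mat_{2×4}(ℂ) with column norms squared (1/3, 1/3, 1/3, 1), with the subspace topology from Mat_{2×4}(ℂ), is not simply connected (its fundamental group is nontrivial). -/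
open Matrix

/-- The space `𝓕ᵈ_{n,k}` of normalized tight frames with prescribed squared column norms `d`. -/
def FrameSpace (n k : ℕ) (d : Fin n → ℝ) : Set (Matrix (Fin k) (Fin n) ℂ) :=
  {F | F * F.conjTranspose = 1 ∧ ∀ j : Fin n, ∑ i : Fin k, ‖F i j‖ ^ 2 = d j}

/-- In the frame space, the fourth column is orthogonal to the first one, so the determinant of
the two has squared norm `1/3`. -/
lemma frame_det_normSq (F : Matrix (Fin 2) (Fin 4) ℂ)
    (hF : F ∈ FrameSpace 4 2 ![1/3, 1/3, 1/3, 1]) :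
    Complex.normSq (F 0 3 * F 1 0 - F 1 3 * F 0 0) = 1 / 3 := by
  obtain ⟨h1, h2⟩ := hF
  have e00 := congrFun (congrFun h1 0) 0
  have e01 := congrFun (congrFun h1 0) 1
  have e11 := congrFun (congrFun h1 1) 1
  have n0 := h2 0
  have n3 := h2 3
  simp only [Matrix.mul_apply, Fin.sum_univ_four, Fin.sum_univ_two, Matrix.conjTranspose_apply,
    Complex.sq_norm, Complex.normSq_apply] at e00 e01 e11 n0 n3
  simp [Complex.ext_iff] at e00 e01 e11 n0 n3
  obtain ⟨e01, e01'⟩ := e01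
  obtain ⟨e00, -⟩ := e00
  obtain ⟨e11, -⟩ := e11
  simp only [Complex.normSq_apply, Complex.sub_re, Complex.sub_im, Complex.mul_re, Complex.mul_im]
  generalize (F 0 0).re = a0 at *
  generalize (F 0 0).im = a0i at *
  generalize (F 0 1).re = a1 at *
  generalize (F 0 1).im = a1i at *
  generalize (F 0 2).re = a2 at *
  generalize (F 0 2).im = a2i at *
  generalize (F 0 3).re = p at *
  generalize (F 0 3).im = pi at *
  generalize (F 1 0).re = b0 at *
  generalize (F 1 0).im = b0i at *
  generalize (F 1 1).re = b1 at *
  generalize (F 1 1).im = b1i at *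
  generalize (F 1 2).re = b2 at *
  generalize (F 1 2).im = b2i at *
  generalize (F 1 3).re = q at *
  generalize (F 1 3).im = qi at *
  have key : ((p*a0+pi*a0i+q*b0+qi*b0i)^2 + (p*a0i-pi*a0+q*b0i-qi*b0)^2)
      + ((p*a1+pi*a1i+q*b1+qi*b1i)^2 + (p*a1i-pi*a1+q*b1i-qi*b1)^2)
      + ((p*a2+pi*a2i+q*b2+qi*b2i)^2 + (p*a2i-pi*a2+q*b2i-qi*b2)^2) = 0 := by
    have s00 : a0*a0+a0i*a0i+(a1*a1+a1i*a1i)+(a2*a2+a2i*a2i) = q*q+qi*qi := by linarith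
    have s11 : b0*b0+b0i*b0i+(b1*b1+b1i*b1i)+(b2*b2+b2i*b2i) = p*p+pi*pi := by linarith
    have s01 : a0*b0+a0i*b0i+(a1*b1+a1i*b1i)+(a2*b2+a2i*b2i) = -(p*q+pi*qi) := by linarith
    have s01' : a0i*b0-a0*b0i+(a1i*b1-a1*b1i)+(a2i*b2-a2*b2i) = -(pi*q-p*qi) := by linarith
    linear_combination (p*p+pi*pi)*s00 + (q*q+qi*qi)*s11 + 2*(p*q+pi*qi)*s01
      + 2*(pi*q-p*qi)*s01'
  have key0 : (p*a0+pi*a0i+q*b0+qi*b0i)^2 + (p*a0i-pi*a0+q*b0i-qi*b0)^2 = 0 := by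
    apply le_antisymm _ (by positivity)
    have : 0 ≤ ((p*a1+pi*a1i+q*b1+qi*b1i)^2 + (p*a1i-pi*a1+q*b1i-qi*b1)^2)
      + ((p*a2+pi*a2i+q*b2+qi*b2i)^2 + (p*a2i-pi*a2+q*b2i-qi*b2)^2) := by positivity
    linarith
  linear_combination (p*p+pi*pi+q*q+qi*qi) * n0 + 1/3 * n3 - key0

/-- The retraction to the circle. -/
noncomputable def frameToCircle : C(FrameSpace 4 2 ![1/3, 1/3, 1/3, 1], Circle) where
  toFun F := ⟨(Real.sqrt 3 : ℂ) * (F.1 0 3 * F.1 1 0 - F.1 1 3 * F.1 0 0), by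
    refine mem_sphere_zero_iff_norm.2 ?_
    rw [← sq_eq_sq₀ (norm_nonneg _) zero_le_one, Complex.sq_norm,
      Complex.normSq_mul, frame_det_normSq F.1 F.2, Complex.normSq_ofReal,
      Real.mul_self_sqrt (by norm_num)]
    norm_num⟩
  continuous_toFun := by
    refine Continuous.subtype_mk ?_ _
    have h : ∀ i j, Continuous fun F : FrameSpace 4 2 ![1/3, 1/3, 1/3, 1] => F.1 i j :=
      fun i j => continuous_subtype_val.matrix_elem i j
    exact continuous_const.mul (((h 0 3).mul (h 1 0)).sub ((h 1 3).mul (h 0 0)))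

/-- The inclusion of the circle. -/
noncomputable def circleToFrame : C(Circle, FrameSpace 4 2 ![1/3, 1/3, 1/3, 1]) where
  toFun z := ⟨!![0, 0, 0, 1;
      (z : ℂ) * ((Real.sqrt 3)⁻¹ : ℝ), ((Real.sqrt 3)⁻¹ : ℝ), ((Real.sqrt 3)⁻¹ : ℝ), 0], by
    have h3 : (((Real.sqrt 3)⁻¹ : ℝ) : ℂ) * ((Real.sqrt 3)⁻¹ : ℝ) = 1 / 3 := by
      rw [← Complex.ofReal_mul, ← mul_inv, Real.mul_self_sqrt (by norm_num)]
      norm_num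
    have h3' : ((Real.sqrt 3)⁻¹) ^ 2 = 1 / 3 := by
      rw [inv_pow, Real.sq_sqrt (by norm_num)]
      norm_num
    have hz : (z : ℂ) * (starRingEnd ℂ) z = 1 := by
      rw [Complex.mul_conj, Circle.normSq_coe, Complex.ofReal_one]
    constructor
    · generalize (Real.sqrt 3)⁻¹ = s at *
      ext i j
      fin_cases i <;> fin_cases j <;>
        simp [Matrix.mul_apply, Fin.sum_univ_four]
      linear_combination (s : ℂ) * s * hz + 3 * h3
    · intro j
      have hs : 0 ≤ (Real.sqrt 3)⁻¹ := by positivity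
      generalize (Real.sqrt 3)⁻¹ = s at *
      fin_cases j <;> simp [Fin.sum_univ_two, Circle.norm_coe] <;> linarith⟩
  continuous_toFun := by
    refine Continuous.subtype_mk ?_ _
    refine continuous_matrix fun i j => ?_
    fin_cases i <;> fin_cases j <;> simp <;> fun_prop

lemma frameToCircle_circleToFrame (z : Circle) : frameToCircle (circleToFrame z) = z := by
  ext
  have h : (Real.sqrt 3 : ℂ) ≠ 0 := by simp
  change (Real.sqrt 3 : ℂ) * (1 * ((z : ℂ) * ((Real.sqrt 3)⁻¹ : ℝ)) - 0 * 0) = z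
  push_cast
  field_simp
  ring

/-- The standard loop. -/
noncomputable def stdLoop : C(unitInterval, Circle) where
  toFun t := Circle.exp (2 * Real.pi * t)
  continuous_toFun := by fun_prop

theorem frameSpace_third_third_third_one_not_simplyConnected :
    ¬ SimplyConnectedSpace ↥(FrameSpace 4 2 ![1/3, 1/3, 1/3, 1]) := by
  intro hX
  let γ : Path (circleToFrame 1) (circleToFrame 1) :=
    { toContinuousMap := circleToFrame.comp stdLoop
      source' := by simp [stdLoop]
      target' := by simp [stdLoop] }
  have hom : Path.Homotopic γ (Path.refl _) := SimplyConnectedSpace.paths_homotopic _ _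
  have hom' := hom.map frameToCircle
  have hone := Circle.isCoveringMap_exp.liftPath_apply_one_eq_of_homotopicRel hom' 0
    (by simp [frameToCircle_circleToFrame]) (by simp [frameToCircle_circleToFrame])
  have l1 := (Circle.isCoveringMap_exp.eq_liftPath_iff' (γ := (γ.map frameToCircle.continuous).toContinuousMap)
    (e := (0 : ℝ)) (by simp [frameToCircle_circleToFrame])
    (Γ := ⟨fun t : unitInterval => 2 * Real.pi * (t : ℝ), by fun_prop⟩)).2
    ⟨by
      ext1 t
      exact (frameToCircle_circleToFrame (stdLoop t)).symm, by simp⟩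
  have l2 := (Circle.isCoveringMap_exp.eq_liftPath_iff'
    (γ := ((Path.refl (circleToFrame 1)).map frameToCircle.continuous).toContinuousMap)
    (e := (0 : ℝ)) (by simp [frameToCircle_circleToFrame])
    (Γ := ContinuousMap.const _ 0)).2
    ⟨by
      ext1 t
      simp [frameToCircle_circleToFrame], by simp⟩
  have l1' := DFunLike.congr_fun l1 1
  have l2' := DFunLike.congr_fun l2 1
  have : 2 * Real.pi * ((1 : unitInterval) : ℝ) = 0 := l1'.trans (hone.trans l2'.symm)
  simp [Real.pi_ne_zero] at this
end
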